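/- arXiv:1301.3810 — 4 statements merged into one kernel-verified Lean document; each statement's English description precedes it below -/
import Mathlib

section
/- Let d ≥ 1 and let a ∈ ℝ^d be such that the translation T ω = ω + a (mod ℤ^d) on the torus 𝕋^d = ℝ^d/ℤ^d is minimal. Then (𝕋^d, T) satisfies (eGRP): for every ω ∈ 𝕋^d, every ε > 0, and every s > 0, there exists an even integer q ≥ 2 such that dist(T^k ω, T^{k+q} ω) < ε for all integers 0 ≤ k ≤ ⌊s·q⌋. -/
open MeasureTheory Filter Metric Topology

noncomputable section

/-- The open unit disk `𝔻` in `ℂ`, as a (metric) subspace of `ℂ`. -/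
abbrev UnitDisk : Type := Metric.ball (0 : ℂ) 1

/-- A point `ω` has the even repetition property for `T` if for every `ε > 0` and `s > 0`
there is an even integer `q ≥ 2` with `dist (T^k ω, T^{k+q} ω) < ε` for all `0 ≤ k ≤ ⌊s·q⌋`. -/
def EvenRepetitionProperty {Ω : Type*} [PseudoMetricSpace Ω] (T : Ω → Ω) (ω : Ω) : Prop :=
  ∀ ε > (0 : ℝ), ∀ s > (0 : ℝ), ∃ q : ℕ, Even q ∧ 2 ≤ q ∧
    ∀ k : ℕ, k ≤ ⌊s * (q : ℝ)⌋₊ → dist (T^[k] ω) (T^[k + q] ω) < ε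

/-! In a totally bounded orbit two iterates `T^m ω` and `T^n ω` with `m < n` are close, and
cancelling the isometry `T^m` shows that `T^(n-m) ω` is close to `ω`. Doubling this return time
makes it even at the price of at most doubling the return error, which does not grow along the
orbit because `T` is an isometry. -/

theorem exists_lt_dist_lt_of_totallyBounded_range {ι X : Type*} [LinearOrder ι] [Infinite ι]
    [PseudoMetricSpace X] {u : ι → X} (hu : TotallyBounded (Set.range u)) {ε : ℝ} (hε : 0 < ε) :
    ∃ m n, m < n ∧ dist (u m) (u n) < ε := by
  obtain ⟨t, ht, hcover⟩ := Metric.totallyBounded_iff.1 hu (ε / 2) (half_pos hε)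
  have hcenter (n : ι) : ∃ c ∈ t, dist (u n) c < ε / 2 := by
    simpa only [Set.mem_iUnion₂, mem_ball, exists_prop] using hcover ⟨n, rfl⟩
  choose c hct hc using hcenter
  obtain ⟨m, n, hmn, hcmn⟩ := ht.exists_lt_map_eq_of_forall_mem hct
  refine ⟨m, n, hmn, ?_⟩
  calc dist (u m) (u n) ≤ dist (u m) (c m) + dist (u n) (c m) := dist_triangle_right _ _ _
    _ < ε / 2 + ε / 2 := add_lt_add (hc m) (hcmn ▸ hc n)
    _ = ε := add_halves ε

theorem isometry_iterate {X : Type*} [PseudoEMetricSpace X] {f : X → X} (hf : Isometry f) :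
    ∀ n : ℕ, Isometry f^[n]
  | 0 => isometry_id
  | n + 1 => (isometry_iterate hf n).comp hf

theorem dist_iterate_iterate_le {X : Type*} [PseudoMetricSpace X] {f : X → X}
    (hf : LipschitzWith 1 f) (n : ℕ) (x y : X) : dist (f^[n] x) (f^[n] y) ≤ dist x y := by
  simpa only [one_pow, NNReal.coe_one, one_mul] using (hf.iterate n).dist_le_mul x y

section Recurrence

variable {Ω : Type*} [PseudoMetricSpace Ω] {T : Ω → Ω} {ω : Ω}

theorem exists_pos_dist_iterate_lt (hT : Isometry T)
    (hω : TotallyBounded (Set.range fun n : ℕ => T^[n] ω)) {ε : ℝ} (hε : 0 < ε) :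
    ∃ n, 0 < n ∧ dist ω (T^[n] ω) < ε := by
  obtain ⟨m, n, hmn, hclose⟩ := exists_lt_dist_lt_of_totallyBounded_range hω hε
  refine ⟨n - m, Nat.sub_pos_of_lt hmn, ?_⟩
  calc dist ω (T^[n - m] ω)
    _ = dist (T^[m] ω) (T^[m] (T^[n - m] ω)) := ((isometry_iterate hT m).dist_eq _ _).symm
    _ = dist (T^[m] ω) (T^[n] ω) := by
        rw [← Function.iterate_add_apply, Nat.add_sub_cancel' hmn.le]
    _ < ε := hclose

theorem evenRepetitionProperty_of_forall_exists_dist_iterate_lt (hT : LipschitzWith 1 T)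
    (hreturn : ∀ ε > (0 : ℝ), ∃ n, 0 < n ∧ dist ω (T^[n] ω) < ε) :
    EvenRepetitionProperty T ω := by
  intro ε hε s _
  obtain ⟨n, hn, hclose⟩ := hreturn (ε / 2) (half_pos hε)
  have hdouble : dist ω (T^[n + n] ω) < ε :=
    calc dist ω (T^[n + n] ω)
      _ ≤ dist ω (T^[n] ω) + dist (T^[n] ω) (T^[n] (T^[n] ω)) := by
          rw [Function.iterate_add_apply]
          exact dist_triangle _ _ _
      _ ≤ dist ω (T^[n] ω) + dist ω (T^[n] ω) := by
          gcongr
          exact dist_iterate_iterate_le hT n ω (T^[n] ω)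
      _ < ε / 2 + ε / 2 := add_lt_add hclose hclose
      _ = ε := add_halves ε
  refine ⟨n + n, Even.add_self n, by lia, fun k _ => ?_⟩
  rw [Function.iterate_add_apply T k]
  exact (dist_iterate_iterate_le hT k ω (T^[n + n] ω)).trans_lt hdouble

theorem minimal_torus_shift_eGRP_general (hT : Isometry T)
    (hω : TotallyBounded (Set.range fun n : ℕ => T^[n] ω)) : EvenRepetitionProperty T ω :=
  evenRepetitionProperty_of_forall_exists_dist_iterate_lt hT.lipschitz
    fun _ hε => exists_pos_dist_iterate_lt hT hω hε

end Recurrence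

/-- Every minimal shift `T ω = ω + a` on the torus `𝕋^d` satisfies (eGRP):
every point has the even repetition property. -/
theorem minimal_torus_shift_eGRP
    (d : ℕ) (hd : 1 ≤ d) (a : Fin d → ℝ)
    (hmin : ∀ ω : Fin d → AddCircle (1 : ℝ),
      Dense (Set.range fun n : ℤ => fun i : Fin d => ω i + n • ((a i : AddCircle (1 : ℝ))))) :
    ∀ ω : Fin d → AddCircle (1 : ℝ),
      EvenRepetitionProperty
        (fun x : Fin d → AddCircle (1 : ℝ) => fun i : Fin d => x i + ((a i : AddCircle (1 : ℝ))))
        ω := by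
  intro ω
  exact minimal_torus_shift_eGRP_general (isometry_add_right _)
    (isCompact_univ.totallyBounded.subset (Set.subset_univ _))

end
end

section
/- Let a ∈ ℝ be irrational and let T be the skew shift on the torus 𝕋² = ℝ²/ℤ² given by T(ω₁, ω₂) = (ω₁ + 2a, ω₁ + ω₂) (mod ℤ²). Then the following are equivalent: (i) a is not badly approximable; (ii) (𝕋², T) satisfies (eGRP); (iii) (𝕋², T, Leb) satisfies (eMRP), where Leb is the normalized Lebesgue measure on 𝕋²; (iv) (𝕋², T) satisfies (eTRP). -/
open MeasureTheory Filter Metric Topology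

noncomputable section

/-- `a ∈ ℝ` is badly approximable if `dist (q·a, ℤ) > c/|q|` for some `c > 0` and
all nonzero integers `q`. -/
def BadlyApproximable (a : ℝ) : Prop :=
  ∃ c > 0, ∀ q : ℤ, q ≠ 0 →
    c / |(q : ℝ)| < |(q : ℝ) * a - round ((q : ℝ) * a)|

/-- The skew shift `T(ω₁, ω₂) = (ω₁ + 2a, ω₁ + ω₂)` on the torus `𝕋² = (ℝ/ℤ)²`. -/
def skewShift (a : ℝ) (p : AddCircle (1 : ℝ) × AddCircle (1 : ℝ)) :
    AddCircle (1 : ℝ) × AddCircle (1 : ℝ) :=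
  (p.1 + ((2 * a : ℝ) : AddCircle (1 : ℝ)), p.1 + p.2)

/-!
The displacement `T^{k+q} ω - T^k ω` of the skew shift is `(2qa, q(ω₁ - a) + q(2k + q)a)`. If it
stays small for all `k ≤ q`, then so do all multiples `k • 2qa` with `k ≤ q`; hence `q ‖2qa‖` is
small and `a` is not badly approximable, so a single point with the even repetition property is
enough. Conversely, choose `p` with `p ‖pa‖` tiny and use Dirichlet's theorem to find a bounded `m`
(with bound independent of `p` and `ω`) making `m • 2p(ω₁ - a)` small; then `q = 2mp` works at `ω`.
-/

section AddCircle

variable {p : ℝ}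

lemma exists_abs_eq_norm_addCircle (x : AddCircle p) :
    ∃ t : ℝ, (t : AddCircle p) = x ∧ |t| = ‖x‖ := by
  induction x using QuotientAddGroup.induction_on with
  | H t =>
    refine ⟨t - round (p⁻¹ * t) * p, ?_, (AddCircle.norm_eq p).symm⟩
    rw [← zsmul_eq_mul, AddCircle.coe_sub, AddCircle.coe_zsmul, AddCircle.coe_period, smul_zero,
      sub_zero]

lemma norm_nsmul_addCircle_eq_mul (hp : p ≠ 0) {x : AddCircle p} {n : ℕ}
    (h : n * ‖x‖ ≤ |p| / 2) : ‖n • x‖ = n * ‖x‖ := by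
  obtain ⟨t, rfl, ht⟩ := exists_abs_eq_norm_addCircle x
  have habs : |n • t| = n * |t| := by rw [nsmul_eq_mul, abs_mul, Nat.abs_cast]
  rw [← ht] at h ⊢
  rw [← AddCircle.coe_nsmul, (AddCircle.norm_coe_eq_abs_iff p hp).2 (habs ▸ h), habs]

/-- The multiples `k • x` move away from `0` in steps of length `‖x‖`, too short to jump from the
ball of radius `δ` past the half period, so they cannot wrap around. -/
lemma mul_norm_addCircle_le_of_forall_norm_nsmul_le (hp : p ≠ 0) {x : AddCircle p} {n : ℕ} {δ : ℝ}
    (hδ : δ ≤ |p| / 4) (h : ∀ k ≤ n, ‖k • x‖ ≤ δ) : n * ‖x‖ ≤ δ := by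
  induction n with
  | zero => simpa using h 0 le_rfl
  | succ n ih =>
    have hn : n * ‖x‖ ≤ δ := ih fun k hk => h k (by omega)
    have hx : ‖x‖ ≤ δ := by simpa using h 1 (by omega)
    have hwrap : (n + 1 : ℕ) * ‖x‖ ≤ |p| / 2 := by push_cast; linarith
    exact norm_nsmul_addCircle_eq_mul hp hwrap ▸ h (n + 1) le_rfl

lemma exists_forall_exists_norm_nsmul_addCircle_lt [Fact (0 < p)] {ε : ℝ} (hε : 0 < ε) :
    ∃ N : ℕ, ∀ x : AddCircle p, ∃ n ∈ Set.Icc 1 N, ‖n • x‖ < ε := by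
  obtain ⟨N, hN⟩ := exists_nat_gt (p / ε)
  have hp : 0 < p := Fact.out
  have hN_pos : (0 : ℝ) < N := (div_pos hp hε).trans hN
  refine ⟨N, fun x => ?_⟩
  obtain ⟨n, hn, hnx⟩ := AddCircle.exists_norm_nsmul_le x (Nat.cast_pos.1 hN_pos)
  refine ⟨n, hn, hnx.trans_lt ?_⟩
  rw [div_lt_iff₀ hε] at hN
  rw [div_lt_iff₀ (by positivity)]
  push_cast
  linarith

end AddCircle

lemma badlyApproximable_iff_forall_nat_lt_mul_norm_nsmul {a : ℝ} :
    BadlyApproximable a ↔ ∃ c > 0, ∀ q : ℕ, 0 < q → c < q * ‖q • (a : UnitAddCircle)‖ := by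
  refine exists_congr fun c => and_congr_right fun _ => ?_
  have hnorm (q : ℤ) : |(q : ℝ) * a - round ((q : ℝ) * a)| = ‖q • (a : UnitAddCircle)‖ := by
    rw [← UnitAddCircle.norm_eq, ← zsmul_eq_mul, AddCircle.coe_zsmul]
  have hiff (q : ℤ) (hq : q ≠ 0) : c / |(q : ℝ)| < |(q : ℝ) * a - round ((q : ℝ) * a)| ↔
      c < q.natAbs * ‖q.natAbs • (a : UnitAddCircle)‖ := by
    rw [hnorm, div_lt_iff₀' (abs_pos.2 (Int.cast_ne_zero.2 hq)), norm_natAbs_smul,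
      Nat.cast_natAbs, Int.cast_abs]
  constructor
  · intro h q hq
    exact (hiff q (by omega)).1 (h q (by omega))
  · intro h q hq
    exact (hiff q hq).2 (h q.natAbs (Int.natAbs_pos.2 hq))

section SkewShift

variable (a : ℝ) (ω : UnitAddCircle × UnitAddCircle)

lemma iterate_skewShift (k : ℕ) :
    (skewShift a)^[k] ω = (ω.1 + (2 * k) • (a : UnitAddCircle),
      ω.2 + k • (ω.1 - a) + k ^ 2 • (a : UnitAddCircle)) := by
  induction k with
  | zero => simp
  | succ k ih =>
    have htwo : ((2 * a : ℝ) : UnitAddCircle) = 2 • (a : UnitAddCircle) := by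
      rw [← AddCircle.coe_nsmul, nsmul_eq_mul, Nat.cast_ofNat]
    rw [Function.iterate_succ_apply', ih, skewShift, htwo]
    ext1 <;> module

lemma dist_iterate_skewShift (k q : ℕ) :
    dist ((skewShift a)^[k] ω) ((skewShift a)^[k + q] ω) =
      max ‖(2 * q) • (a : UnitAddCircle)‖
        ‖q • (ω.1 - a) + (q * (2 * k + q)) • (a : UnitAddCircle)‖ := by
  rw [dist_comm, dist_eq_norm, iterate_skewShift, iterate_skewShift, Prod.norm_def,
    Prod.mk_sub_mk]
  congr 2 <;> module

variable {a ω}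

/-- The second coordinates of the displacements `T^{k+q} ω - T^k ω` form an arithmetic progression
in `k` with difference `2qa`. -/
lemma mul_norm_nsmul_le_of_forall_dist_iterate_skewShift_le {n q : ℕ} {δ : ℝ} (hδ : δ ≤ 1 / 8)
    (h : ∀ k ≤ n, dist ((skewShift a)^[k] ω) ((skewShift a)^[k + q] ω) ≤ δ) :
    n * ‖(2 * q) • (a : UnitAddCircle)‖ ≤ 2 * δ := by
  set displacement : ℕ → UnitAddCircle := fun k =>
    q • (ω.1 - a) + (q * (2 * k + q)) • (a : UnitAddCircle)
  have hdisplacement (k : ℕ) (hk : k ≤ n) : ‖displacement k‖ ≤ δ :=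
    (le_max_right _ _).trans ((dist_iterate_skewShift a ω k q).symm.trans_le (h k hk))
  refine mul_norm_addCircle_le_of_forall_norm_nsmul_le one_ne_zero
    (by rw [abs_one]; linarith) fun k hk => ?_
  calc ‖k • (2 * q) • (a : UnitAddCircle)‖
      = ‖displacement k - displacement 0‖ := by congr 1; simp only [displacement]; module
    _ ≤ ‖displacement k‖ + ‖displacement 0‖ := norm_sub_le _ _
    _ ≤ 2 * δ := by linarith [hdisplacement k hk, hdisplacement 0 (Nat.zero_le n)]

lemma EvenRepetitionProperty.not_badlyApproximable
    (h : EvenRepetitionProperty (skewShift a) ω) : ¬ BadlyApproximable a := by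
  rw [badlyApproximable_iff_forall_nat_lt_mul_norm_nsmul]
  rintro ⟨c, hc, hbad⟩
  obtain ⟨q, -, hq_two, hq⟩ := h (min (1 / 8) (c / 4)) (by positivity) 1 one_pos
  have hq_mul : q * ‖(2 * q) • (a : UnitAddCircle)‖ ≤ 2 * min (1 / 8) (c / 4) :=
    mul_norm_nsmul_le_of_forall_dist_iterate_skewShift_le (min_le_left _ _) fun k hk =>
      (hq k (by rwa [one_mul, Nat.floor_natCast])).le
  have hq_bad : c < (2 * q : ℕ) * ‖(2 * q) • (a : UnitAddCircle)‖ := hbad (2 * q) (by omega)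
  push_cast at hq_bad
  linarith [min_le_right (1 / 8) (c / 4)]

variable (a ω)

/-- Taking the period `2mp` instead of `2p` lets `m` be chosen, depending on `ω`, so that the
first term is small; the second is small once `p` is a good denominator for `a`. -/
lemma dist_iterate_skewShift_le (k m : ℕ) {p : ℕ} (hp : 0 < p) :
    dist ((skewShift a)^[k] ω) ((skewShift a)^[k + 2 * (m * p)] ω) ≤
      ‖m • (2 * p) • (ω.1 - a)‖ + 4 * m * (k + m * p) * ‖p • (a : UnitAddCircle)‖ := by
  have hfst : (2 * (2 * (m * p))) • (a : UnitAddCircle) = (4 * m) • p • (a : UnitAddCircle) := by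
    module
  have hsnd : (2 * (m * p)) • (ω.1 - a) +
      (2 * (m * p) * (2 * k + 2 * (m * p))) • (a : UnitAddCircle) =
      m • (2 * p) • (ω.1 - a) + (4 * m * (k + m * p)) • p • (a : UnitAddCircle) := by
    module
  have hcoeff : 4 * m ≤ 4 * m * (k + m * p) := by
    rcases m.eq_zero_or_pos with rfl | hm
    · simp
    · exact Nat.le_mul_of_pos_right _ (by positivity)
  have hbound : ‖(4 * m * (k + m * p)) • p • (a : UnitAddCircle)‖ ≤
      4 * m * (k + m * p) * ‖p • (a : UnitAddCircle)‖ := by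
    exact_mod_cast norm_nsmul_le (n := 4 * m * (k + m * p)) (a := p • (a : UnitAddCircle))
  rw [dist_iterate_skewShift, hfst, hsnd]
  refine max_le ?_ ((norm_add_le _ _).trans (by gcongr))
  calc ‖(4 * m) • p • (a : UnitAddCircle)‖
      ≤ (4 * m : ℕ) * ‖p • (a : UnitAddCircle)‖ := norm_nsmul_le
    _ ≤ (4 * m * (k + m * p) : ℕ) * ‖p • (a : UnitAddCircle)‖ := by gcongr
    _ = 4 * m * (k + m * p) * ‖p • (a : UnitAddCircle)‖ := by push_cast; rfl
    _ ≤ ‖m • (2 * p) • (ω.1 - a)‖ + 4 * m * (k + m * p) * ‖p • (a : UnitAddCircle)‖ :=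
      le_add_of_nonneg_left (norm_nonneg _)

variable {a}

lemma evenRepetitionProperty_skewShift_of_not_badlyApproximable (h : ¬ BadlyApproximable a) :
    EvenRepetitionProperty (skewShift a) ω := by
  intro ε hε s hs
  obtain ⟨N, hN⟩ := exists_forall_exists_norm_nsmul_addCircle_lt (p := 1) (half_pos hε)
  obtain ⟨p, hp, hpa⟩ : ∃ p : ℕ, 0 < p ∧ p * ‖p • (a : UnitAddCircle)‖ ≤
      ε / 2 / (4 * (2 * s + 1) * (N + 1) ^ 2) := by
    simp only [badlyApproximable_iff_forall_nat_lt_mul_norm_nsmul, not_exists, not_and,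
      not_forall, not_lt, exists_prop] at h
    exact h _ (by positivity)
  obtain ⟨m, ⟨hm, hmN⟩, hreturn⟩ := hN ((2 * p) • (ω.1 - a))
  have hmp : 0 < m * p := Nat.mul_pos hm hp
  refine ⟨2 * (m * p), even_two_mul _, by omega, fun k hk => ?_⟩
  have hk' : (k : ℝ) ≤ s * (2 * (m * p)) := by
    exact_mod_cast (Nat.le_floor_iff (by positivity)).1 hk
  have hmN' : (m : ℝ) ≤ N + 1 := by exact_mod_cast hmN.trans N.le_succ
  have hdrift : 4 * m * (k + m * p) * ‖p • (a : UnitAddCircle)‖ ≤ ε / 2 :=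
    calc 4 * m * (k + m * p) * ‖p • (a : UnitAddCircle)‖
        ≤ 4 * m * (s * (2 * (m * p)) + m * p) * ‖p • (a : UnitAddCircle)‖ := by gcongr
      _ = 4 * (2 * s + 1) * m ^ 2 * (p * ‖p • (a : UnitAddCircle)‖) := by ring
      _ ≤ 4 * (2 * s + 1) * (N + 1) ^ 2 * (p * ‖p • (a : UnitAddCircle)‖) := by gcongr
      _ ≤ ε / 2 := (le_div_iff₀' (by positivity)).1 hpa
  linarith [dist_iterate_skewShift_le a ω k m hp]

end SkewShift

theorem skew_shift_eGRP_eMRP_eTRP_tfae_general (a : ℝ)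
    (μ : Measure (AddCircle (1 : ℝ) × AddCircle (1 : ℝ))) [NeZero μ] :
    [¬ BadlyApproximable a,
      ∀ ω : AddCircle (1 : ℝ) × AddCircle (1 : ℝ), EvenRepetitionProperty (skewShift a) ω,
      ∀ᵐ ω ∂μ, EvenRepetitionProperty (skewShift a) ω,
      Dense {ω : AddCircle (1 : ℝ) × AddCircle (1 : ℝ) |
        EvenRepetitionProperty (skewShift a) ω}].TFAE := by
  have not_bad_of_exists : (∃ ω, EvenRepetitionProperty (skewShift a) ω) → ¬ BadlyApproximable a :=
    fun ⟨_, hω⟩ => hω.not_badlyApproximable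
  tfae_have 1 → 2 := fun h ω => evenRepetitionProperty_skewShift_of_not_badlyApproximable ω h
  tfae_have 2 → 3 := Eventually.of_forall
  tfae_have 3 → 1 := fun h => not_bad_of_exists h.exists
  tfae_have 2 → 4 := fun h => dense_univ.mono fun ω _ => h ω
  tfae_have 4 → 1 := fun h => not_bad_of_exists h.nonempty
  tfae_finish

/-- For an irrational `a` and the skew shift on `𝕋²`, the following are equivalent:
(i) `a` is not badly approximable; (ii) (eGRP); (iii) (eMRP) w.r.t. normalized
Lebesgue measure; (iv) (eTRP). -/
theorem skew_shift_eGRP_eMRP_eTRP_tfae (a : ℝ) (hirr : Irrational a) :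
    [¬ BadlyApproximable a,
      ∀ ω : AddCircle (1 : ℝ) × AddCircle (1 : ℝ), EvenRepetitionProperty (skewShift a) ω,
      ∀ᵐ ω ∂(volume : Measure (AddCircle (1 : ℝ) × AddCircle (1 : ℝ))),
        EvenRepetitionProperty (skewShift a) ω,
      Dense {ω : AddCircle (1 : ℝ) × AddCircle (1 : ℝ) |
        EvenRepetitionProperty (skewShift a) ω}].TFAE :=
  skew_shift_eGRP_eMRP_eTRP_tfae_general a volume

end
end

section
/- Let a ∈ ℝ be not badly approximable and let T be the skew shift on the torus 𝕋² = ℝ²/ℤ² given by T(ω₁, ω₂) = (ω₁ + 2a, ω₁ + ω₂) (mod ℤ²). Then (𝕋², T) satisfies (eGRP): for every (ω₁, ω₂) ∈ 𝕋², every ε > 0, and every s > 0, there exists an even integer q ≥ 2 such that dist(T^k(ω₁, ω₂), T^{k+q}(ω₁, ω₂)) < ε for all integers 0 ≤ k ≤ ⌊s·q⌋. -/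
open MeasureTheory Filter Metric Topology

noncomputable section

/-!
If `q = 2r`, then `T^{k+q}(x, y) - T^k(x, y) = (2 • rb, 2r • x + (2k + 2r - 1) • rb)`, where `b` is
the translation in the first coordinate. For `k ≤ sq` this is small as soon as `‖r • 2x‖` and
`r ‖rb‖` are small. Bad approximability fails for `b`, so some `n` makes `n ‖nb‖` as small as we
like; by the pigeonhole principle `‖m • (2n • x)‖` is small for some `m` at most a bound that does
not depend on `n`, and `r = mn` works.
-/

section SkewShift

variable {G : Type*}

/-- The skew shift `(x, y) ↦ (x + b, x + y)` over translation by `b` on an additive group `G`;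
`skewShift a` is the case `G = ℝ/ℤ`, `b = 2a`. -/
def groupSkewShift [Add G] (b : G) (p : G × G) : G × G :=
  (p.1 + b, p.1 + p.2)

theorem groupSkewShift_iterate [AddCommMonoid G] (b : G) (p : G × G) (k : ℕ) :
    (groupSkewShift b)^[k] p = (p.1 + k • b, p.2 + k • p.1 + k.choose 2 • b) := by
  induction k with
  | zero => simp
  | succ k ih =>
    have hchoose : (k + 1).choose 2 = k + k.choose 2 := by
      rw [Nat.choose_succ_succ', Nat.choose_one_right]
    rw [Function.iterate_succ_apply', ih, hchoose]
    ext1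
    · simp only [groupSkewShift, succ_nsmul, add_assoc]
    · simp only [groupSkewShift, succ_nsmul, add_nsmul]
      abel

theorem choose_two_add_two_mul (k r : ℕ) :
    (k + 2 * r).choose 2 = k.choose 2 + (2 * k + (2 * r - 1)) * r := by
  rcases r with _ | r
  · simp
  · have hsub : 2 * (r + 1) - 1 = 2 * r + 1 := by omega
    qify
    rw [hsub, Nat.cast_choose_two, Nat.cast_choose_two]
    push_cast
    ring

variable [SeminormedAddCommGroup G]

/- The period is taken even so that `choose (2 * r) 2` is a multiple of `r`: then the displacement
involves `b` only through `r • b`. -/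
theorem dist_groupSkewShift_iterate_le (b : G) (p : G × G) (k : ℕ) {r : ℕ} (hr : 0 < r) :
    dist ((groupSkewShift b)^[k] p) ((groupSkewShift b)^[k + 2 * r] p) ≤
      ‖r • (2 • p.1)‖ + (2 * k + 2 * r) * ‖r • b‖ := by
  have hr' : (1 : ℝ) ≤ r := by exact_mod_cast hr
  rw [dist_comm, groupSkewShift_iterate, groupSkewShift_iterate, Prod.dist_eq, dist_eq_norm,
    dist_eq_norm]
  refine max_le ?_ ?_
  · have hfst : p.1 + (k + 2 * r) • b - (p.1 + k • b) = 2 • r • b := by module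
    calc ‖p.1 + (k + 2 * r) • b - (p.1 + k • b)‖
        = ‖2 • r • b‖ := by rw [hfst]
      _ ≤ (2 : ℕ) * ‖r • b‖ := norm_nsmul_le
      _ ≤ (2 * k + 2 * r) * ‖r • b‖ := by
        gcongr
        push_cast
        linarith [(k.cast_nonneg : (0 : ℝ) ≤ k)]
      _ ≤ ‖r • (2 • p.1)‖ + (2 * k + 2 * r) * ‖r • b‖ := le_add_of_nonneg_left (norm_nonneg _)
  · have hsnd : p.2 + (k + 2 * r) • p.1 + (k + 2 * r).choose 2 • b
        - (p.2 + k • p.1 + k.choose 2 • b) = r • (2 • p.1) + (2 * k + (2 * r - 1)) • r • b := by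
      rw [choose_two_add_two_mul, add_nsmul b, mul_nsmul']
      module
    rw [hsnd]
    refine (norm_add_le _ _).trans (add_le_add_right (norm_nsmul_le.trans ?_) _)
    gcongr
    exact_mod_cast (by omega : 2 * k + (2 * r - 1) ≤ 2 * k + 2 * r)

end SkewShift

section Approximation

variable {G : Type*} [SeminormedAddCommGroup G]

/-- Bad approximability for an element of a seminormed group, with `‖n • b‖` in the role of the
distance from `n * a` to `ℤ`; since `‖-x‖ = ‖x‖`, positive multiples suffice. -/
def BadlyApproximableElement (b : G) : Prop :=
  ∃ c > 0, ∀ n : ℕ, 0 < n → c < n * ‖n • b‖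

theorem badlyApproximableElement_coe_iff {a : ℝ} :
    BadlyApproximableElement (a : AddCircle (1 : ℝ)) ↔ BadlyApproximable a := by
  have norm_zsmul (q : ℤ) : ‖q • (a : AddCircle (1 : ℝ))‖ = |q * a - round (q * a)| := by
    rw [← AddCircle.coe_zsmul, zsmul_eq_mul, UnitAddCircle.norm_eq]
  refine exists_congr fun c => and_congr_right fun _ => ⟨fun h q hq => ?_, fun h n hn => ?_⟩
  · have hq' : (0 : ℝ) < |(q : ℝ)| := by positivity
    rw [div_lt_iff₀' hq', ← norm_zsmul, ← norm_natAbs_smul, ← Int.cast_abs, ← Nat.cast_natAbs]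
    exact h q.natAbs (Int.natAbs_pos.mpr hq)
  · have hn' : (0 : ℝ) < n := by exact_mod_cast hn
    have h := h n (by exact_mod_cast hn.ne')
    rwa [← norm_zsmul, natCast_zsmul, Int.cast_natCast, Nat.abs_cast, div_lt_iff₀' hn'] at h

theorem BadlyApproximableElement.of_nsmul {m : ℕ} {b : G}
    (h : BadlyApproximableElement (m • b)) : BadlyApproximableElement b := by
  obtain ⟨c, hc, h⟩ := h
  refine ⟨c / (m + 1), by positivity, fun n hn => ?_⟩
  rw [div_lt_iff₀' (by positivity)]
  calc c < n * ‖n • m • b‖ := h n hn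
    _ = n * ‖m • n • b‖ := by rw [smul_comm]
    _ ≤ n * (m * ‖n • b‖) := by gcongr; exact norm_nsmul_le
    _ ≤ (m + 1) * (n * ‖n • b‖) := by nlinarith [mul_nonneg n.cast_nonneg (norm_nonneg (n • b))]

theorem exists_forall_exists_norm_nsmul_lt [CompactSpace G] {δ : ℝ} (hδ : 0 < δ) :
    ∃ N : ℕ, ∀ x : G, ∃ m : ℕ, 0 < m ∧ m ≤ N ∧ ‖m • x‖ < δ := by
  obtain ⟨t, -, ht, hcover⟩ :=
    finite_cover_balls_of_compact (isCompact_univ (X := G)) (half_pos hδ)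
  refine ⟨ht.toFinset.card, fun x => ?_⟩
  have hnear (i : ℕ) : ∃ y ∈ t, dist (i • x) y < δ / 2 := by
    simpa using hcover (Set.mem_univ (i • x))
  choose center hmem hdist using hnear
  obtain ⟨i, hi, j, hj, hij, hcenter⟩ := Finset.exists_ne_map_eq_of_card_lt_of_maps_to
    (s := Finset.range (ht.toFinset.card + 1)) (t := ht.toFinset) (f := center) (by simp)
    (fun i _ => by simpa using hmem i)
  wlog hlt : i < j generalizing i j
  · exact this j hj i hi hij.symm hcenter.symm (by omega)
  refine ⟨j - i, by omega, by grind, ?_⟩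
  rw [sub_nsmul x hlt.le, ← sub_eq_add_neg, ← dist_eq_norm]
  linarith [dist_triangle_right (j • x) (i • x) (center j), hdist j, hcenter ▸ hdist i]

theorem exists_norm_nsmul_lt_of_not_badlyApproximableElement [CompactSpace G] {b : G}
    (hb : ¬ BadlyApproximableElement b) (x : G) {δ c : ℝ} (hδ : 0 < δ) (hc : 0 < c) :
    ∃ r : ℕ, 0 < r ∧ ‖r • x‖ < δ ∧ r * ‖r • b‖ < c := by
  obtain ⟨N, hN⟩ := exists_forall_exists_norm_nsmul_lt (G := G) hδ
  obtain ⟨n, hn, hnb⟩ : ∃ n : ℕ, 0 < n ∧ n * ‖n • b‖ ≤ c / (N ^ 2 + 1) := by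
    simp only [BadlyApproximableElement] at hb
    push Not at hb
    exact hb _ (by positivity)
  obtain ⟨m, hm, hmN, hmx⟩ := hN (n • x)
  refine ⟨m * n, by positivity, by rwa [mul_nsmul'], ?_⟩
  calc ((m * n : ℕ) : ℝ) * ‖(m * n) • b‖
      ≤ (m * n : ℕ) * (m * ‖n • b‖) := by rw [mul_nsmul']; gcongr; exact norm_nsmul_le
    _ = m ^ 2 * (n * ‖n • b‖) := by push_cast; ring
    _ ≤ N ^ 2 * (c / (N ^ 2 + 1)) := by gcongr
    _ < c := by
      rw [mul_div_assoc', div_lt_iff₀ (by positivity)]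
      linarith

end Approximation

theorem skew_shift_eGRP_of_not_badlyApproximable_general {G : Type*} [SeminormedAddCommGroup G]
    [CompactSpace G] {b : G} (hb : ¬ BadlyApproximableElement b) (ω : G × G) :
    EvenRepetitionProperty (groupSkewShift b) ω := by
  intro ε hε s hs
  obtain ⟨r, hr, hrω, hrb⟩ := exists_norm_nsmul_lt_of_not_badlyApproximableElement hb (2 • ω.1)
    (half_pos hε) (by positivity : 0 < ε / 2 / (4 * s + 2))
  rw [lt_div_iff₀' (by positivity)] at hrb
  refine ⟨2 * r, even_two_mul r, by omega, fun k hk => ?_⟩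
  have hks : (k : ℝ) ≤ s * (2 * r) := by
    exact_mod_cast (Nat.le_floor_iff (by positivity)).mp hk
  calc dist ((groupSkewShift b)^[k] ω) ((groupSkewShift b)^[k + 2 * r] ω)
      ≤ ‖r • (2 • ω.1)‖ + (2 * k + 2 * r) * ‖r • b‖ := dist_groupSkewShift_iterate_le b ω k hr
    _ ≤ ‖r • (2 • ω.1)‖ + (2 * (s * (2 * r)) + 2 * r) * ‖r • b‖ := by gcongr
    _ = ‖r • (2 • ω.1)‖ + (4 * s + 2) * (r * ‖r • b‖) := by ring
    _ < ε / 2 + ε / 2 := add_lt_add hrω hrb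
    _ = ε := add_halves ε

/-- If `a` is not badly approximable then the skew shift on `𝕋²` satisfies (eGRP). -/
theorem skew_shift_eGRP_of_not_badlyApproximable (a : ℝ) (hnba : ¬ BadlyApproximable a) :
    ∀ ω : AddCircle (1 : ℝ) × AddCircle (1 : ℝ),
      EvenRepetitionProperty (skewShift a) ω := by
  have hcoe : ((2 * a : ℝ) : AddCircle (1 : ℝ)) = 2 • (a : AddCircle (1 : ℝ)) := by
    rw [← AddCircle.coe_nsmul, nsmul_eq_mul, Nat.cast_ofNat]
  exact skew_shift_eGRP_of_not_badlyApproximable_general fun h =>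
    hnba (badlyApproximableElement_coe_iff.mp (hcoe ▸ h).of_nsmul)

end
end

section
/- Let a ∈ ℝ be irrational and let T be the skew shift on the torus 𝕋² = ℝ²/ℤ² given by T(ω₁, ω₂) = (ω₁ + 2a, ω₁ + ω₂) (mod ℤ²). If (𝕋², T) satisfies (eTRP), then a is not badly approximable. -/
/-!
Two orbits of the skew shift `T` drift apart linearly: the second coordinate of
`T^k ω' - T^k ω` is `(ω'₂ - ω₂) + k (ω'₁ - ω₁)`. Taking `ω' = T^q ω`, where
`ω'₁ - ω₁ = 2qa`, a repetition of length `m q` keeps all of `k · 2qa`, `k ≤ m q`, close to `0` in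
`ℝ/ℤ`. The multiples of a point cannot wrap around the circle while staying near `0`, so
`m q · dist(2qa, ℤ)` is bounded by a constant; as `m` is arbitrary, `a` is not badly approximable.
-/

open MeasureTheory Filter Metric Topology

noncomputable section

/-- A point `ω` has the repetition property for `T` if its orbit has initial segments that
almost repeat an arbitrarily large number `s` of times: this is `EvenRepetitionProperty` with the
period `q` allowed to be any positive integer. -/
def RepetitionProperty {Ω : Type*} [PseudoMetricSpace Ω] (T : Ω → Ω) (ω : Ω) : Prop :=
  ∀ ε > (0 : ℝ), ∀ s > (0 : ℝ), ∃ q : ℕ, 0 < q ∧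
    ∀ k : ℕ, k ≤ ⌊s * (q : ℝ)⌋₊ → dist (T^[k] ω) (T^[k + q] ω) < ε

lemma EvenRepetitionProperty.repetitionProperty {Ω : Type*} [PseudoMetricSpace Ω] {T : Ω → Ω}
    {ω : Ω} (h : EvenRepetitionProperty T ω) : RepetitionProperty T ω := by
  intro ε hε s hs
  obtain ⟨q, -, hq, hdist⟩ := h ε hε s hs
  exact ⟨q, by lia, hdist⟩

lemma norm_nsmul_addCircle_eq {p : ℝ} (hp : p ≠ 0) {x : AddCircle p} {n : ℕ}
    (hx : n * ‖x‖ ≤ |p| / 2) : ‖n • x‖ = n * ‖x‖ := by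
  obtain ⟨t, rfl, ht⟩ : ∃ t : ℝ, (t : AddCircle p) = x ∧ |t| = ‖x‖ := by
    obtain ⟨t, rfl⟩ := QuotientAddGroup.mk_surjective x
    exact ⟨t - round (p⁻¹ * t) * p, by simp [AddCircle.coe_period], (AddCircle.norm_eq p).symm⟩
  rw [← ht, ← Nat.abs_cast n, ← abs_mul] at hx ⊢
  rw [← AddCircle.coe_nsmul, nsmul_eq_mul]
  exact (AddCircle.norm_coe_eq_abs_iff p hp).mpr hx

lemma nat_mul_norm_addCircle_lt {p : ℝ} {x : AddCircle p} {n : ℕ}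
    (hx : ∀ k ≤ n, ‖k • x‖ < |p| / 4) : n * ‖x‖ < |p| / 4 := by
  have hp : 0 < |p| := by simpa using hx 0 n.zero_le
  induction n with
  | zero => simpa using hp
  | succ n ih =>
    have hn : n * ‖x‖ < |p| / 4 := ih fun k hk ↦ hx k (by lia)
    have h_one : ‖x‖ < |p| / 4 := by simpa only [one_nsmul] using hx 1 (by lia)
    have h_half : (n + 1 : ℕ) * ‖x‖ ≤ |p| / 2 := by
      push_cast
      linarith
    rw [← norm_nsmul_addCircle_eq (abs_pos.mp hp) h_half]
    exact hx (n + 1) le_rfl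

section SkewShift

variable {a : ℝ} {ω ω' : AddCircle (1 : ℝ) × AddCircle (1 : ℝ)}

lemma skewShift_iterate_fst (n : ℕ) :
    ((skewShift a)^[n] ω).1 = ω.1 + n • ((2 * a : ℝ) : AddCircle (1 : ℝ)) := by
  induction n with
  | zero => simp
  | succ n ih => rw [Function.iterate_succ_apply', skewShift, ih, succ_nsmul, add_assoc]

lemma skewShift_iterate_snd_sub (n : ℕ) :
    ((skewShift a)^[n] ω').2 - ((skewShift a)^[n] ω).2 =
      (ω'.2 - ω.2) + n • (ω'.1 - ω.1) := by
  induction n with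
  | zero => simp
  | succ n ih =>
    simp only [Function.iterate_succ_apply', skewShift, skewShift_iterate_fst, add_sub_add_comm,
      ih, succ_nsmul]
    abel

lemma norm_nsmul_fst_sub_lt_of_dist_iterate_lt {ε : ℝ} {n : ℕ}
    (h : ∀ k ≤ n, dist ((skewShift a)^[k] ω) ((skewShift a)^[k] ω') < ε) :
    ∀ k ≤ n, ‖k • (ω'.1 - ω.1)‖ < 2 * ε := by
  have h_snd (k : ℕ) (hk : k ≤ n) : ‖(ω'.2 - ω.2) + k • (ω'.1 - ω.1)‖ < ε := by
    rw [← skewShift_iterate_snd_sub (a := a), ← dist_eq_norm, dist_comm]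
    exact (le_max_right _ _).trans_lt (h k hk)
  intro k hk
  have h_zero : ‖ω'.2 - ω.2‖ < ε := by simpa using h_snd 0 n.zero_le
  calc ‖k • (ω'.1 - ω.1)‖ = ‖((ω'.2 - ω.2) + k • (ω'.1 - ω.1)) - (ω'.2 - ω.2)‖ := by
        rw [add_sub_cancel_left]
    _ ≤ ‖(ω'.2 - ω.2) + k • (ω'.1 - ω.1)‖ + ‖ω'.2 - ω.2‖ := norm_sub_le _ _
    _ < 2 * ε := by linarith [h_snd k hk]

lemma nat_mul_norm_two_mul_lt_of_dist_iterate_lt {n q : ℕ}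
    (h : ∀ k ≤ n, dist ((skewShift a)^[k] ω) ((skewShift a)^[k + q] ω) < 1 / 8) :
    n * ‖((2 * q * a : ℝ) : AddCircle (1 : ℝ))‖ < 1 / 4 := by
  have h_shift : ((skewShift a)^[q] ω).1 - ω.1 = ((2 * q * a : ℝ) : AddCircle (1 : ℝ)) := by
    rw [skewShift_iterate_fst, add_sub_cancel_left, ← AddCircle.coe_nsmul, nsmul_eq_mul,
      mul_left_comm, ← mul_assoc]
  simp only [Function.iterate_add_apply] at h
  have h_small := norm_nsmul_fst_sub_lt_of_dist_iterate_lt h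
  rw [h_shift] at h_small
  simpa using nat_mul_norm_addCircle_lt (p := 1) fun k hk ↦ (h_small k hk).trans_eq (by norm_num)

end SkewShift

lemma BadlyApproximable.exists_lt_norm {a : ℝ} (ha : BadlyApproximable a) :
    ∃ c > 0, ∀ q : ℤ, q ≠ 0 → c < |(q : ℝ)| * ‖((q * a : ℝ) : AddCircle (1 : ℝ))‖ := by
  obtain ⟨c, hc, h⟩ := ha
  refine ⟨c, hc, fun q hq ↦ ?_⟩
  have hq_pos : 0 < |(q : ℝ)| := abs_pos.mpr (Int.cast_ne_zero.mpr hq)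
  rw [UnitAddCircle.norm_eq, mul_comm, ← div_lt_iff₀ hq_pos]
  exact h q hq

theorem not_badlyApproximable_of_skew_shift_eTRP_general {a : ℝ}
    {ω : AddCircle (1 : ℝ) × AddCircle (1 : ℝ)} (hω : RepetitionProperty (skewShift a) ω) :
    ¬ BadlyApproximable a := by
  intro ha
  obtain ⟨c, hc, h_lower⟩ := ha.exists_lt_norm
  obtain ⟨m, hm⟩ := exists_nat_gt (1 / c)
  have hm_pos : (0 : ℝ) < m := (one_div_pos.mpr hc).trans hm
  obtain ⟨q, hq, h_repeat⟩ := hω (1 / 8) (by norm_num) m hm_pos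
  rw [← Nat.cast_mul, Nat.floor_natCast] at h_repeat
  have h_upper := nat_mul_norm_two_mul_lt_of_dist_iterate_lt h_repeat
  have h_lower_q : c < 2 * q * ‖((2 * q * a : ℝ) : AddCircle (1 : ℝ))‖ := by
    simpa [abs_mul] using h_lower (2 * q) (by lia)
  have h_one_lt : 1 < m * c := (div_lt_iff₀ hc).mp hm
  have h_mc : m * c < 1 / 2 := by
    calc m * c < m * (2 * q * ‖((2 * q * a : ℝ) : AddCircle (1 : ℝ))‖) := by gcongr
      _ = 2 * ((m * q : ℕ) * ‖((2 * q * a : ℝ) : AddCircle (1 : ℝ))‖) := by push_cast; ring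
      _ < 1 / 2 := by linarith
  linarith

/-- If the skew shift on `𝕋²` (with `a` irrational) satisfies (eTRP), then `a` is not
badly approximable. -/
theorem not_badlyApproximable_of_skew_shift_eTRP (a : ℝ) (hirr : Irrational a)
    (heTRP : Dense {ω : AddCircle (1 : ℝ) × AddCircle (1 : ℝ) |
      EvenRepetitionProperty (skewShift a) ω}) :
    ¬ BadlyApproximable a := by
  obtain ⟨ω, hω⟩ := heTRP.nonempty
  exact not_badlyApproximable_of_skew_shift_eTRP_general hω.repetitionProperty

end
end
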